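/- arXiv:0705.1392 — 4 statements merged into one kernel-verified Lean document; each statement's English description precedes it below -/
import Mathlib

section
/- Let Ω be an open interval of ℝ and let k be a natural number. If f : ℝ → ℝ is k times continuously differentiable and has compact support contained in Ω, then there exist functions f₁, f₂ : ℝ → ℝ, each k times continuously differentiable with compact support contained in Ω, such that f₁ and f₂ are nonnegative, f = f₁ - f₂, and the pointwise square roots √f₁ and √f₂ are also k times continuously differentiable with compact support contained in Ω. -/
/-- If `Ω` is an open interval of `ℝ` and `f ∈ C^k_c(Ω)`, then there exist
nonnegative `f₁, f₂ ∈ C^k_c(Ω)` with `f = f₁ - f₂` and `√f₁, √f₂ ∈ C^k_c(Ω)`. -/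
theorem ssf_decomposition_sqrt
    (Ω : Set ℝ) (hΩopen : IsOpen Ω) (hΩconn : Ω.OrdConnected) (k : ℕ)
    (f : ℝ → ℝ) (hf : ContDiff ℝ k f) (hfc : HasCompactSupport f)
    (hfΩ : tsupport f ⊆ Ω) :
    ∃ f₁ f₂ : ℝ → ℝ,
      ContDiff ℝ k f₁ ∧ HasCompactSupport f₁ ∧ tsupport f₁ ⊆ Ω ∧
      ContDiff ℝ k f₂ ∧ HasCompactSupport f₂ ∧ tsupport f₂ ⊆ Ω ∧
      (∀ x, 0 ≤ f₁ x) ∧ (∀ x, 0 ≤ f₂ x) ∧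
      f = f₁ - f₂ ∧
      ContDiff ℝ k (fun x => Real.sqrt (f₁ x)) ∧
      HasCompactSupport (fun x => Real.sqrt (f₁ x)) ∧
      tsupport (fun x => Real.sqrt (f₁ x)) ⊆ Ω ∧
      ContDiff ℝ k (fun x => Real.sqrt (f₂ x)) ∧
      HasCompactSupport (fun x => Real.sqrt (f₂ x)) ∧
      tsupport (fun x => Real.sqrt (f₂ x)) ⊆ Ω := by
  obtain ⟨U, hUo, hKU, hUΩ, hUc⟩ :=
    exists_open_between_and_isCompact_closure hfc.isCompact hΩopen hfΩ
  obtain ⟨χ, hχ, hχr, hχs, hχ1⟩ := exists_contMDiff_support_eq_eq_one_iff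
    (modelWithCornersSelf ℝ ℝ) (n := k) hUo (isClosed_tsupport f) hKU
  rw [contMDiff_iff_contDiff] at hχ
  obtain ⟨C, hC⟩ := hfc.exists_bound_of_continuous hf.continuous
  have key : ∀ s : ℝ, |s| = 1 → ∃ h : ℝ → ℝ, h = (fun x => (s * f x + (|C| + 1) ^ 2 * χ x) /
      (2 * (|C| + 1))) ∧ ContDiff ℝ k h ∧ HasCompactSupport h ∧ tsupport h ⊆ Ω ∧ ∀ x, 0 ≤ h x := by
    intro s hs
    refine ⟨_, rfl, ?_⟩
    have hsub : tsupport (fun x => (s * f x + (|C| + 1) ^ 2 * χ x) / (2 * (|C| + 1)))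
        ⊆ closure U := by
      apply closure_mono
      intro x hx
      by_contra hxU
      have h1 : f x = 0 := image_eq_zero_of_notMem_tsupport (fun h => hxU (hKU h))
      have h2 : χ x = 0 := by
        rw [← hχs] at hxU
        simpa using hxU
      simp [h1, h2] at hx
    refine ⟨by fun_prop, hUc.of_isClosed_subset (isClosed_tsupport _) hsub,
      hsub.trans hUΩ, fun x => ?_⟩
    have h0 : 0 ≤ χ x := (hχr ⟨x, rfl⟩).1
    have hc := abs_nonneg C
    apply div_nonneg _ (by positivity)
    by_cases hx : x ∈ tsupport f
    · rw [(hχ1 x).1 hx]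
      have h3 : |s * f x| ≤ |C| := by
        rw [abs_mul, hs, one_mul]
        exact (hC x).trans (le_abs_self C)
      have := (abs_le.1 h3).1
      nlinarith
    · rw [image_eq_zero_of_notMem_tsupport hx, mul_zero, zero_add]
      positivity
  obtain ⟨h, he, h1, h2, h3, h4⟩ := key 1 (by simp)
  obtain ⟨g, ge, g1, g2, g3, g4⟩ := key (-1) (by simp)
  have hs : ∀ u : ℝ → ℝ, tsupport (fun x => u x ^ 2) = tsupport u := by
    intro u
    unfold tsupport
    congr 1
    ext x
    simp
  have hh : (fun x => Real.sqrt (h x ^ 2)) = h := funext fun x => Real.sqrt_sq (h4 x)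
  have gg : (fun x => Real.sqrt (g x ^ 2)) = g := funext fun x => Real.sqrt_sq (g4 x)
  refine ⟨fun x => h x ^ 2, fun x => g x ^ 2, h1.pow 2, ?_, ?_, g1.pow 2, ?_, ?_,
    fun x => sq_nonneg _, fun x => sq_nonneg _, ?_, ?_⟩
  · unfold HasCompactSupport; rw [hs]; exact h2
  · rw [hs]; exact h3
  · unfold HasCompactSupport; rw [hs]; exact g2
  · rw [hs]; exact g3
  · funext x
    have hc : |C| + 1 ≠ 0 := by positivity
    have hfx : f x = f x * χ x := by
      by_cases hx : x ∈ tsupport f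
      · rw [(hχ1 x).1 hx, mul_one]
      · rw [image_eq_zero_of_notMem_tsupport hx, zero_mul]
    simp only [Pi.sub_apply, he, ge]
    refine hfx.trans ?_
    field_simp
    ring
  · simp only [hh, gg]
    exact ⟨h1, h2, h3, g1, g2, g3⟩
end

section
/- Let φ : ℝ → ℝ be the function φ(x) = x(1+x²)^{-1/2}. Then φ is twice continuously differentiable, and the Fourier transforms of its first derivative φ'(x) = (1+x²)^{-3/2} and of its second derivative φ''(x) = -3x(1+x²)^{-5/2} are both integrable functions on ℝ (that is, φ belongs to the class C²₊ of C² functions all of whose first and second derivatives have integrable Fourier transform). -/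
open MeasureTheory

/-- The Fourier transform with the normalization `𝓕f(ξ) = (2π)^{-1/2} ∫ f(x) e^{-iξx} dx`. -/
noncomputable def fourierTransform' (f : ℝ → ℂ) (ξ : ℝ) : ℂ :=
  (Real.sqrt (2 * Real.pi))⁻¹ • ∫ x : ℝ, f x * Complex.exp (-(Complex.I * ξ * x))

/-- The function `φ(x) = x (1 + x²)^{-1/2}`. -/
noncomputable def phiFn (x : ℝ) : ℝ := x * (1 + x ^ 2) ^ (-(1 : ℝ) / 2)

open FourierTransform in
lemma aux_fourier_integrable (f f1 f2 : ℝ → ℂ) (h1 : ∀ x, HasDerivAt f (f1 x) x)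
    (h2 : ∀ x, HasDerivAt f1 (f2 x) x) (i0 : Integrable f) (i1 : Integrable f1)
    (i2 : Integrable f2) : Integrable (fourierTransform' f) := by
  have e1 : deriv f = f1 := funext fun x => (h1 x).deriv
  have e2 : deriv f1 = f2 := funext fun x => (h2 x).deriv
  have F1 := Real.fourier_deriv i0 (fun x => (h1 x).differentiableAt) (by rw [e1]; exact i1)
  have F2 := Real.fourier_deriv i1 (fun x => (h2 x).differentiableAt) (by rw [e2]; exact i2)
  rw [e1] at F1
  rw [e2, F1] at F2
  have hb : ∀ (g : ℝ → ℂ) (w : ℝ), ‖𝓕 g w‖ ≤ ∫ x, ‖g x‖ := fun g w =>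
    VectorFourier.norm_fourierIntegral_le_integral_norm _ _ _ _ _
  have hc : Continuous (𝓕 f) :=
    VectorFourier.fourierIntegral_continuous Real.continuous_fourierChar
      (by exact continuous_inner) i0
  have key : Integrable (𝓕 f) := by
    refine ((integrable_inv_one_add_sq).const_mul
      ((∫ x, ‖f x‖) + ∫ x, ‖f2 x‖)).mono' hc.aestronglyMeasurable ?_
    filter_upwards with w
    have a := hb f w
    have b := hb f2 w
    rw [F2] at b
    simp only [norm_smul, norm_mul, Complex.norm_I, Complex.norm_real, Complex.norm_ofNat,
      Real.norm_eq_abs, mul_one, abs_of_pos Real.pi_pos] at b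
    have hp : 0 < 1 + w ^ 2 := by positivity
    rw [← div_eq_mul_inv, le_div_iff₀ hp]
    have hN := norm_nonneg (𝓕 f w)
    have hpi : 1 ≤ 2 * Real.pi := by linarith [Real.pi_gt_three]
    have : w ^ 2 * ‖𝓕 f w‖ ≤ 2 * Real.pi * |w| * (2 * Real.pi * |w| * ‖𝓕 f w‖) := by
      rw [← sq_abs w]
      have : 0 ≤ |w| ^ 2 * ‖𝓕 f w‖ := by positivity
      have h4 : 1 ≤ (2 * Real.pi) ^ 2 := one_le_pow₀ hpi
      have h5 := mul_le_mul_of_nonneg_right h4 this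
      linarith [h5]
    linarith
  have : fourierTransform' f = fun ξ => (Real.sqrt (2 * Real.pi))⁻¹ • 𝓕 f (ξ / (2 * Real.pi)) := by
    funext ξ
    rw [fourierTransform', Real.fourier_real_eq_integral_exp_smul]
    congr 2
    funext x
    rw [smul_eq_mul, mul_comm]
    congr 2
    have := Real.pi_ne_zero
    have h : -2 * Real.pi * x * (ξ / (2 * Real.pi)) = -(ξ * x) := by field_simp
    rw [h]
    push_cast
    ring
  rw [this]
  exact (key.comp_div (R := 2 * Real.pi) (by positivity)).smul (Real.sqrt (2 * Real.pi))⁻¹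

lemma aux_int (k : ℕ) (s : ℝ) (h : (k : ℝ) / 2 + s ≤ -1) :
    Integrable (fun x : ℝ => x ^ k * (1 + x ^ 2) ^ s) := by
  have hp : ∀ x : ℝ, 0 < 1 + x ^ 2 := fun x => by positivity
  refine integrable_inv_one_add_sq.mono' ?_ ?_
  · refine Continuous.aestronglyMeasurable ?_
    exact (continuous_id.pow k).mul
      ((by fun_prop : Continuous fun x : ℝ => 1 + x ^ 2).rpow_const fun x => Or.inl (hp x).ne')
  · filter_upwards with x
    rw [norm_mul, Real.norm_eq_abs, Real.norm_eq_abs, abs_of_pos (Real.rpow_pos_of_pos (hp x) s),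
      abs_pow]
    have h1 : |x| ^ k ≤ (1 + x ^ 2) ^ ((k : ℝ) / 2) := by
      rw [div_eq_mul_inv, mul_comm, Real.rpow_mul (hp x).le, Real.rpow_natCast]
      gcongr
      rw [← one_div, ← Real.sqrt_eq_rpow]
      exact Real.abs_le_sqrt (by linarith)
    calc _ ≤ (1 + x ^ 2) ^ ((k : ℝ) / 2) * (1 + x ^ 2) ^ s := by
          gcongr
      _ = (1 + x ^ 2) ^ ((k : ℝ) / 2 + s) := (Real.rpow_add (hp x) _ _).symm
      _ ≤ (1 + x ^ 2) ^ (-1 : ℝ) :=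
          Real.rpow_le_rpow_of_exponent_le (by nlinarith [sq_nonneg x]) h
      _ = _ := Real.rpow_neg_one _

lemma aux_w (s t : ℝ) (h : t = s - 1) (x : ℝ) :
    HasDerivAt (fun x : ℝ => (1 + x ^ 2) ^ s) (2 * x * s * (1 + x ^ 2) ^ t) x := by
  subst h
  have : HasDerivAt (fun x : ℝ => 1 + x ^ 2) (2 * x) x := by
    simpa using (hasDerivAt_pow 2 x).const_add 1
  exact this.rpow_const (Or.inl (by positivity))

lemma aux_d0 (x : ℝ) : HasDerivAt phiFn ((1 + x ^ 2) ^ (-(3 : ℝ) / 2)) x := by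
  have := (hasDerivAt_id x).mul (aux_w (-(1 : ℝ) / 2) (-(3 : ℝ) / 2) (by norm_num) x)
  refine this.congr_deriv ?_
  have hp : 0 < 1 + x ^ 2 := by positivity
  have e : (1 + x ^ 2) ^ (-(1 : ℝ) / 2) = (1 + x ^ 2) ^ (-(3 : ℝ) / 2) * (1 + x ^ 2) := by
    rw [← Real.rpow_add_one hp.ne']; norm_num
  simp only [id]
  rw [e]; ring

lemma aux_d1 (x : ℝ) : HasDerivAt (fun x : ℝ => (1 + x ^ 2) ^ (-(3 : ℝ) / 2))
    (-3 * x * (1 + x ^ 2) ^ (-(5 : ℝ) / 2)) x :=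
  (aux_w (-(3 : ℝ) / 2) (-(5 : ℝ) / 2) (by norm_num) x).congr_deriv (by ring)

lemma aux_d2 (x : ℝ) : HasDerivAt (fun x : ℝ => -3 * x * (1 + x ^ 2) ^ (-(5 : ℝ) / 2))
    (-3 * (x ^ 0 * (1 + x ^ 2) ^ (-(5 : ℝ) / 2)) + 15 * (x ^ 2 * (1 + x ^ 2) ^ (-(7 : ℝ) / 2))) x :=
  (((hasDerivAt_id x).const_mul (-3)).mul
    (aux_w (-(5 : ℝ) / 2) (-(7 : ℝ) / 2) (by norm_num) x)).congr_deriv (by simp only [id]; ring)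

lemma aux_d3 (x : ℝ) : HasDerivAt (fun x : ℝ => -3 * (x ^ 0 * (1 + x ^ 2) ^ (-(5 : ℝ) / 2))
      + 15 * (x ^ 2 * (1 + x ^ 2) ^ (-(7 : ℝ) / 2)))
    (45 * (x ^ 1 * (1 + x ^ 2) ^ (-(7 : ℝ) / 2))
      + (-105) * (x ^ 3 * (1 + x ^ 2) ^ (-(9 : ℝ) / 2))) x :=
  ((((hasDerivAt_pow 0 x).mul
    (aux_w (-(5 : ℝ) / 2) (-(7 : ℝ) / 2) (by norm_num) x)).const_mul (-3)).add
  (((hasDerivAt_pow 2 x).mul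
    (aux_w (-(7 : ℝ) / 2) (-(9 : ℝ) / 2) (by norm_num) x)).const_mul 15)).congr_deriv
    (by simp; ring)

/-- `φ(x) = x(1+x²)^{-1/2}` is `C²`, its first derivative is `(1+x²)^{-3/2}`,
its second derivative is `-3x(1+x²)^{-5/2}`, and the Fourier transforms of the first and
second derivatives are integrable; i.e. `φ ∈ C²₊(ℝ)`. -/
theorem phi_mem_C2_plus :
    ContDiff ℝ 2 phiFn ∧
    (∀ x : ℝ, deriv phiFn x = (1 + x ^ 2) ^ (-(3 : ℝ) / 2)) ∧
    (∀ x : ℝ, deriv (deriv phiFn) x = -3 * x * (1 + x ^ 2) ^ (-(5 : ℝ) / 2)) ∧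
    Integrable (fourierTransform' (fun x => Complex.ofReal (deriv phiFn x))) ∧
    Integrable (fourierTransform' (fun x => Complex.ofReal (deriv (deriv phiFn) x))) := by
  have e1 : deriv phiFn = fun x : ℝ => (1 + x ^ 2) ^ (-(3 : ℝ) / 2) :=
    funext fun x => (aux_d0 x).deriv
  have e2 : deriv (deriv phiFn) = fun x : ℝ => -3 * x * (1 + x ^ 2) ^ (-(5 : ℝ) / 2) := by
    rw [e1]; exact funext fun x => (aux_d1 x).deriv
  have i1 : Integrable (fun x : ℝ => (1 + x ^ 2) ^ (-(3 : ℝ) / 2)) := by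
    simpa using aux_int 0 (-(3 : ℝ) / 2) (by norm_num)
  have i2 : Integrable (fun x : ℝ => -3 * x * (1 + x ^ 2) ^ (-(5 : ℝ) / 2)) := by
    simpa [mul_assoc] using (aux_int 1 (-(5 : ℝ) / 2) (by norm_num)).const_mul (-3)
  have i3 := ((aux_int 0 (-(5 : ℝ) / 2) (by norm_num)).const_mul (-3)).add
    ((aux_int 2 (-(7 : ℝ) / 2) (by norm_num)).const_mul 15)
  have i4 := ((aux_int 1 (-(7 : ℝ) / 2) (by norm_num)).const_mul 45).add
    ((aux_int 3 (-(9 : ℝ) / 2) (by norm_num)).const_mul (-105))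
  refine ⟨?_, fun x => congrFun e1 x, fun x => congrFun e2 x, ?_, ?_⟩
  · refine contDiff_id.mul (ContDiff.rpow_const_of_ne ?_ fun x => ?_)
    · fun_prop
    · positivity
  · rw [e1]
    exact aux_fourier_integrable _ _ _ (fun x => (aux_d1 x).ofReal_comp)
      (fun x => (aux_d2 x).ofReal_comp) i1.ofReal i2.ofReal i3.ofReal
  · rw [e2]
    exact aux_fourier_integrable _ _ _ (fun x => (aux_d2 x).ofReal_comp)
      (fun x => (aux_d3 x).ofReal_comp) i2.ofReal i3.ofReal i4.ofReal
end

section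
/- Let g : ℝ → ℝ be twice continuously differentiable with compact support. Then for all real numbers λ₀ ≠ λ₁, the divided difference of g admits the integral representation (g(λ₀) - g(λ₁)) / (λ₀ - λ₁) = (i/√(2π)) ∫_{ℝ²} 1_Π(s₀, s₁) · sgn(s₀) · 𝓕g(s₀) · e^{i(s₀ - s₁)λ₀} · e^{i s₁ λ₁} d(s₀, s₁), where the integral is with respect to two-dimensional Lebesgue measure and is absolutely convergent. -/
open MeasureTheory

/-- The region `Π = {(s₀, s₁) : |s₁| ≤ |s₀|, sign s₀ = sign s₁}`. -/
def PiRegion : Set (ℝ × ℝ) :=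
  {p : ℝ × ℝ | (0 ≤ p.2 ∧ p.2 ≤ p.1) ∨ (p.1 ≤ p.2 ∧ p.2 ≤ 0)}


open scoped FourierTransform ContDiff

lemma aux_sign_measurable : Measurable Real.sign := by
  unfold Real.sign
  refine Measurable.ite measurableSet_Iio measurable_const
    (Measurable.ite measurableSet_Ioi measurable_const measurable_const)

lemma aux_fourier_continuous (h : ℝ → ℂ) (hi : Integrable h) : Continuous (𝓕 h) :=
  VectorFourier.fourierIntegral_continuous Real.continuous_fourierChar
    (by simpa using (by fun_prop : Continuous fun p : ℝ × ℝ => p.2 * p.1)) hi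

lemma aux_memLp (h : ℝ → ℂ) (hc : Continuous h) (hs : HasCompactSupport h) :
    MemLp (𝓕 h) 2 := by
  have hi : Integrable h := hc.integrable_of_hasCompactSupport hs
  have h2 : MemLp h 2 := hc.memLp_of_hasCompactSupport hs
  have hae : ∀ᵐ x, (𝓕 (h2.toLp h) : Lp ℂ 2 (volume : Measure ℝ)) x = 𝓕 h x := by
    apply ae_eq_of_integral_contDiff_smul_eq
    · exact (Lp.memLp _).locallyIntegrable (by norm_num)
    · exact (aux_fourier_continuous h hi).locallyIntegrable
    intro φ hφ hφs
    have hφs' : HasCompactSupport (Complex.ofRealCLM ∘ φ) := hφs.comp_left rfl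
    have hφ' : ContDiff ℝ ∞ (Complex.ofRealCLM ∘ φ) := by fun_prop
    set Φ := hφs'.toSchwartzMap hφ' with hΦ
    have e1 := Lp.fourier_toTemperedDistribution_eq (h2.toLp h)
    have e2 := congrArg (fun T => T Φ) e1
    simp only [TemperedDistribution.fourier_apply, Lp.toTemperedDistribution_apply] at e2
    have e3 := VectorFourier.integral_fourierIntegral_smul_eq_flip (f := (Φ : ℝ → ℂ)) (g := h)
      (μ := volume) (ν := volume) (L := innerₗ ℝ)
      Real.continuous_fourierChar (by simpa using (by fun_prop : Continuous fun p : ℝ × ℝ => p.2 * p.1)) Φ.integrable hi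
    have e4 : ∫ x, (𝓕 Φ) x • (h2.toLp h) x = ∫ x, (𝓕 Φ) x • h x := by
      apply integral_congr_ae
      filter_upwards [h2.coeFn_toLp] with x hx
      rw [hx]
    rw [e4] at e2
    rw [flip_innerₗ] at e3
    have e5 : ∫ x, (𝓕 Φ) x • h x = ∫ x, Φ x • 𝓕 h x := e3
    rw [e5] at e2
    simpa [hΦ] using e2.symm
  exact (memLp_congr_ae hae).1 (Lp.memLp _)

lemma aux_int_s6 (u : ℝ → ℂ) (hu : MemLp u 2) (hu' : MemLp (fun x : ℝ => (x : ℂ) * u x) 2) :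
    Integrable u := by
  have i1 := hu.integrable_norm_pow (by norm_num)
  have i2 := hu'.integrable_norm_pow (by norm_num)
  refine ((integrable_inv_one_add_sq.add i1).add i2).mono' hu.1 (ae_of_all _ fun x => ?_)
  simp only [Pi.add_apply, norm_mul, Complex.norm_real, Real.norm_eq_abs, mul_pow, sq_abs]
  have hp : 0 < 1 + x ^ 2 := by positivity
  generalize ‖u x‖ = a
  have : (1 + x^2)⁻¹ + a^2 + x^2 * a^2 - a = (1+x^2) * ((a - (1+x^2)⁻¹/2)^2 + 3/4 * ((1+x^2)⁻¹)^2) := by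
    field_simp
    ring
  have : 0 ≤ (1 + x^2)⁻¹ + a^2 + x^2 * a^2 - a := by rw [this]; positivity
  linarith

lemma aux_fint (G : ℝ → ℂ) (hG : ContDiff ℝ 2 G) (hs : HasCompactSupport G) :
    Integrable (𝓕 G) ∧ Integrable (fun x : ℝ => (x : ℂ) * 𝓕 G x) := by
  have c0 := hG.continuous
  have c1 : ContDiff ℝ 1 (deriv G) := by
    have : ContDiff ℝ (1 + 1) G := by simpa [one_add_one_eq_two] using hG
    exact (contDiff_succ_iff_deriv.1 this).2.2
  have c2 : Continuous (deriv (deriv G)) := c1.continuous_deriv le_rfl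
  have s1 := hs.deriv
  have s2 := s1.deriv
  have i0 := c0.integrable_of_hasCompactSupport (μ := volume) hs
  have i1 := c1.continuous.integrable_of_hasCompactSupport (μ := volume) s1
  have i2 := c2.integrable_of_hasCompactSupport (μ := volume) s2
  have f1 := Real.fourier_deriv i0 (hG.differentiable (by norm_num)) i1
  have f2 := Real.fourier_deriv i1 (c1.differentiable (by norm_num)) i2
  have m0 := aux_memLp G c0 hs
  have m1 := aux_memLp _ c1.continuous s1
  have m2 := aux_memLp _ c2 s2
  have hpi : (2 * Real.pi * Complex.I : ℂ) ≠ 0 := by simp [Real.pi_ne_zero]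
  have n1 : MemLp (fun x : ℝ => (x : ℂ) * 𝓕 G x) 2 := by
    convert m1.const_mul (2 * Real.pi * Complex.I : ℂ)⁻¹ using 2 with x
    rw [f1]; simp only [smul_eq_mul]; field_simp
  have n2 : MemLp (fun x : ℝ => (x : ℂ) * ((x : ℂ) * 𝓕 G x)) 2 := by
    convert m2.const_mul ((2 * Real.pi * Complex.I : ℂ)⁻¹ ^ 2) using 2 with x
    rw [f2, f1]; simp only [smul_eq_mul]; field_simp
  exact ⟨aux_int_s6 _ m0 n1, aux_int_s6 _ n1 n2⟩

lemma aux_ft (G : ℝ → ℂ) (s : ℝ) :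
    fourierTransform' G s = ((Real.sqrt (2 * Real.pi) : ℂ))⁻¹ * 𝓕 G (s / (2 * Real.pi)) := by
  rw [fourierTransform', Real.fourier_real_eq_integral_exp_smul, Complex.real_smul]
  push_cast
  congr 1
  apply integral_congr_ae (ae_of_all _ fun x => ?_)
  simp only [smul_eq_mul]
  rw [mul_comm]
  congr 2
  have := Complex.ofReal_ne_zero.2 Real.pi_ne_zero
  push_cast
  field_simp

lemma aux_ft_int (G : ℝ → ℂ) (hG : ContDiff ℝ 2 G) (hs : HasCompactSupport G) :
    Continuous (fourierTransform' G) ∧ Integrable (fourierTransform' G) ∧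
      Integrable (fun x : ℝ => (x : ℂ) * fourierTransform' G x) ∧
      ∀ l : ℝ, ∫ s : ℝ, fourierTransform' G s * Complex.exp (Complex.I * s * l) =
        (Real.sqrt (2 * Real.pi) : ℂ) * G l := by
  obtain ⟨a, b⟩ := aux_fint G hG hs
  have hi := hG.continuous.integrable_of_hasCompactSupport (μ := volume) hs
  have hp : (2 * Real.pi) ≠ 0 := by simp [Real.pi_ne_zero]
  have e : fourierTransform' G = fun s => ((Real.sqrt (2 * Real.pi) : ℂ))⁻¹ * 𝓕 G (s / (2 * Real.pi)) :=
    funext (aux_ft G)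
  have hc := aux_fourier_continuous G hi
  refine ⟨?_, ?_, ?_, fun l => ?_⟩
  · rw [e]; fun_prop
  · rw [e]; exact (a.comp_div hp).const_mul _
  · convert ((b.comp_div hp).const_mul ((2 * Real.pi) * ((Real.sqrt (2 * Real.pi) : ℂ))⁻¹)) using 2 with s
    rw [e]
    have := Complex.ofReal_ne_zero.2 Real.pi_ne_zero
    push_cast
    field_simp
  · have inv := congrFun (hG.continuous.fourierInv_fourier_eq hi a) l
    rw [Real.fourierInv_eq_fourier_neg, Real.fourier_real_eq_integral_exp_smul] at inv
    rw [← inv]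
    have key := Measure.integral_comp_div (fun x : ℝ => Complex.exp (↑(-2 * Real.pi * x * -l) * Complex.I) • 𝓕 G x) (2 * Real.pi)
    have hsq : (Real.sqrt (2 * Real.pi) : ℂ) * (Real.sqrt (2 * Real.pi) : ℂ) = 2 * Real.pi := by
      rw [← Complex.ofReal_mul, Real.mul_self_sqrt (by positivity)]; push_cast; rfl
    have hne : (Real.sqrt (2 * Real.pi) : ℂ) ≠ 0 := by
      rw [Complex.ofReal_ne_zero]; positivity
    rw [abs_of_pos (by positivity), Complex.real_smul] at key
    have : ∫ s : ℝ, fourierTransform' G s * Complex.exp (Complex.I * s * l) =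
        ((Real.sqrt (2 * Real.pi) : ℂ))⁻¹ * ∫ x : ℝ, Complex.exp (↑(-2 * Real.pi * (x / (2 * Real.pi)) * -l) * Complex.I) • 𝓕 G (x / (2 * Real.pi)) := by
      rw [← integral_const_mul]
      congr 1; ext s
      rw [e]
      simp only [smul_eq_mul]
      have h3 : (↑(-2 * Real.pi * (s / (2 * Real.pi)) * -l) * Complex.I) = Complex.I * s * l := by
        have := Complex.ofReal_ne_zero.2 Real.pi_ne_zero
        push_cast
        field_simp
      rw [h3]; ring
    rw [this, key, ← mul_assoc]
    congr 1
    push_cast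
    rw [← hsq, ← mul_assoc, inv_mul_cancel₀ hne, one_mul]

lemma aux_mem (s t : ℝ) : (s, t) ∈ PiRegion ↔ t ∈ Set.uIcc 0 s := by
  rw [Set.mem_uIcc]; rfl

lemma aux_closed : IsClosed PiRegion := by
  apply IsClosed.union
  · exact (isClosed_le continuous_const continuous_snd).inter (isClosed_le continuous_snd continuous_fst)
  · exact (isClosed_le continuous_fst continuous_snd).inter (isClosed_le continuous_snd continuous_const)

lemma aux_sign_int (s : ℝ) (f : ℝ → ℂ) :
    (Real.sign s : ℂ) * ∫ t in Set.uIcc 0 s, f t = ∫ t in (0 : ℝ)..s, f t := by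
  rcases lt_trichotomy s 0 with h | h | h
  · rw [Real.sign_of_neg h, Set.uIcc_of_ge h.le, integral_Icc_eq_integral_Ioc,
      intervalIntegral.integral_of_ge h.le]; simp
  · subst h; simp
  · rw [Real.sign_of_pos h, Set.uIcc_of_le h.le, integral_Icc_eq_integral_Ioc,
      intervalIntegral.integral_of_le h.le]; simp

/-- Main theorem. -/
theorem divided_difference_BS_representation
    (g : ℝ → ℝ) (hg : ContDiff ℝ 2 g) (hsupp : HasCompactSupport g)
    (lam₀ lam₁ : ℝ) (hne : lam₀ ≠ lam₁) :
    Integrable (PiRegion.indicator (fun p : ℝ × ℝ =>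
        (Real.sign p.1 : ℂ) * fourierTransform' (fun x => Complex.ofReal (g x)) p.1 *
          Complex.exp (Complex.I * (p.1 - p.2) * lam₀) *
          Complex.exp (Complex.I * p.2 * lam₁))) ∧
    ((g lam₀ - g lam₁ : ℝ) : ℂ) / ((lam₀ - lam₁ : ℝ) : ℂ) =
      (Complex.I / (Real.sqrt (2 * Real.pi) : ℂ)) *
        ∫ p : ℝ × ℝ, PiRegion.indicator (fun p : ℝ × ℝ =>
          (Real.sign p.1 : ℂ) * fourierTransform' (fun x => Complex.ofReal (g x)) p.1 *
            Complex.exp (Complex.I * (p.1 - p.2) * lam₀) *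
            Complex.exp (Complex.I * p.2 * lam₁)) p := by
  have hG : ContDiff ℝ 2 (fun x => Complex.ofReal (g x)) := Complex.ofRealCLM.contDiff.comp hg
  have hGs : HasCompactSupport (fun x => Complex.ofReal (g x)) :=
    hsupp.comp_left (g := Complex.ofReal) rfl
  obtain ⟨hHc, hHi, hHi', hinv⟩ := aux_ft_int _ hG hGs
  set G : ℝ → ℂ := fun x => Complex.ofReal (g x) with hGdef
  set H := fourierTransform' G with hH
  set F : ℝ × ℝ → ℂ := fun p : ℝ × ℝ =>
        (Real.sign p.1 : ℂ) * H p.1 *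
          Complex.exp (Complex.I * (p.1 - p.2) * lam₀) *
          Complex.exp (Complex.I * p.2 * lam₁) with hF
  have hFm : AEStronglyMeasurable (PiRegion.indicator F) (volume : Measure (ℝ × ℝ)) := by
    apply AEStronglyMeasurable.indicator _ aux_closed.measurableSet
    apply Measurable.aestronglyMeasurable
    have := aux_sign_measurable
    have := hHc.measurable
    fun_prop
  have hsec : ∀ s : ℝ, (fun t => PiRegion.indicator F (s, t)) =
      (Set.uIcc 0 s).indicator (fun t => F (s, t)) := by
    intro s; ext t
    by_cases h : t ∈ Set.uIcc 0 s
    · rw [Set.indicator_of_mem h, Set.indicator_of_mem ((aux_mem s t).2 h)]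
    · rw [Set.indicator_of_notMem h, Set.indicator_of_notMem (fun h' => h ((aux_mem s t).1 h'))]
  have hms : ∀ s : ℝ, MeasurableSet (Set.uIcc 0 s) := fun s => measurableSet_uIcc
  have hnorm : ∀ s t : ℝ, ‖F (s, t)‖ = |Real.sign s| * ‖H s‖ := by
    intro s t
    have e1 : Complex.I * ((s : ℂ) - t) * lam₀ = ((s - t) * lam₀ : ℝ) * Complex.I := by
      push_cast; ring
    have e2 : Complex.I * (t : ℂ) * lam₁ = (t * lam₁ : ℝ) * Complex.I := by
      push_cast; ring
    simp only [hF, norm_mul, e1, e2, Complex.norm_exp_ofReal_mul_I, mul_one, Complex.norm_real,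
      Real.norm_eq_abs]
  have hFint : Integrable (PiRegion.indicator F) (volume : Measure (ℝ × ℝ)) := by
    rw [Measure.volume_eq_prod] at hFm ⊢
    rw [integrable_prod_iff hFm]
    constructor
    · refine ae_of_all _ fun s => ?_
      rw [hsec, integrable_indicator_iff (hms s)]
      apply ContinuousOn.integrableOn_compact isCompact_uIcc
      apply Continuous.continuousOn
      simp only [hF]
      fun_prop
    · refine hHi'.norm.congr (ae_of_all _ fun s => ?_)
      have : (fun t => ‖PiRegion.indicator F (s, t)‖) =
          (Set.uIcc 0 s).indicator (fun t => |Real.sign s| * ‖H s‖) := by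
        ext t
        rw [congrFun (hsec s) t, norm_indicator_eq_indicator_norm]
        simp only [hnorm]
      simp only [this]
      rw [integral_indicator (hms s), setIntegral_const, measureReal_def, Real.volume_interval,
        ENNReal.toReal_ofReal (abs_nonneg _), norm_mul, Complex.norm_real, smul_eq_mul, sub_zero,
        Real.norm_eq_abs]
      rcases lt_trichotomy s 0 with h | h | h
      · simp [Real.sign_of_neg h]
      · simp [h]
      · simp [Real.sign_of_pos h]
  refine ⟨hFint, ?_⟩
  have hI := Complex.I_ne_zero
  have hd : (lam₁ : ℂ) - lam₀ ≠ 0 := by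
    rw [sub_ne_zero]; exact_mod_cast hne.symm
  have hd' : (lam₀ : ℂ) - lam₁ ≠ 0 := by
    rw [sub_ne_zero]; exact_mod_cast hne
  have hinner : ∀ s : ℝ, ∫ t, PiRegion.indicator F (s, t) =
      (Complex.I * (lam₁ - lam₀))⁻¹ * (H s * Complex.exp (Complex.I * s * lam₁) -
        H s * Complex.exp (Complex.I * s * lam₀)) := by
    intro s
    rw [hsec, integral_indicator (hms s)]
    have e1 : ∀ t : ℝ, F (s, t) = (Real.sign s : ℂ) * (H s * Complex.exp (Complex.I * s * lam₀) *
        Complex.exp ((Complex.I * (lam₁ - lam₀)) * t)) := by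
      intro t
      simp only [hF]
      rw [mul_assoc, ← Complex.exp_add, mul_assoc (H s), ← Complex.exp_add, mul_assoc]
      have e0 : Complex.I * ((s : ℂ) - t) * lam₀ + Complex.I * t * lam₁ =
          Complex.I * s * lam₀ + Complex.I * (lam₁ - lam₀) * t := by ring
      rw [e0]
    simp only [e1]
    rw [integral_const_mul, aux_sign_int, intervalIntegral.integral_const_mul,
      integral_exp_mul_complex (mul_ne_zero hI hd)]
    have e2 : Complex.exp (Complex.I * s * lam₁) = Complex.exp (Complex.I * s * lam₀) *
        Complex.exp ((Complex.I * (lam₁ - lam₀)) * s) := by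
      rw [← Complex.exp_add]; congr 1; ring
    rw [e2]
    simp only [Complex.ofReal_zero, mul_zero, Complex.exp_zero]
    field_simp
  have hint : ∀ l : ℝ, Integrable (fun s : ℝ => H s * Complex.exp (Complex.I * s * l)) := by
    intro l
    refine hHi.mono (by fun_prop) (ae_of_all _ fun s => ?_)
    have e2 : Complex.I * (s : ℂ) * l = (s * l : ℝ) * Complex.I := by
      push_cast; ring
    rw [e2, norm_mul, Complex.norm_exp_ofReal_mul_I, mul_one]
  have hsq : (Real.sqrt (2 * Real.pi) : ℂ) ≠ 0 := by
    rw [Complex.ofReal_ne_zero]; positivity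
  have htot : ∫ p : ℝ × ℝ, PiRegion.indicator F p = (Complex.I * (lam₁ - lam₀))⁻¹ *
      ((Real.sqrt (2 * Real.pi) : ℂ) * G lam₁ - (Real.sqrt (2 * Real.pi) : ℂ) * G lam₀) := by
    rw [Measure.volume_eq_prod] at hFint ⊢
    rw [integral_prod _ hFint]
    simp only [hinner]
    rw [integral_const_mul, integral_sub (hint _) (hint _), hinv, hinv]
  rw [htot]
  simp only [hGdef]
  push_cast
  field_simp
  ring
end

section
/- Let f : ℝ → ℝ be a nonnegative, twice continuously differentiable function with compact support such that g := √f is also twice continuously differentiable with compact support. Then for all real numbers λ₀ ≠ λ₁, the divided difference of f admits the Birman–Solomyak representation (f(λ₀) - f(λ₁)) / (λ₀ - λ₁) = (i/√(2π)) ∫_{ℝ²} 1_Π(s₀, s₁) · sgn(s₀) · 𝓕g(s₀) · ( e^{i(s₀ - s₁)λ₀} g(λ₀) e^{i s₁ λ₁} + e^{i(s₀ - s₁)λ₀} e^{i s₁ λ₁} g(λ₁) ) d(s₀, s₁), where the integral is with respect to two-dimensional Lebesgue measure and is absolutely convergent. -/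
open MeasureTheory

section helpers
open FourierTransform SchwartzMap

lemma aux_memLp_fourier (h : ℝ → ℂ) (hc : Continuous h) (hs : HasCompactSupport h) :
    MemLp (𝓕 h) 2 volume := by
  have hi : Integrable h := hc.integrable_of_hasCompactSupport hs
  have h2 : MemLp h 2 volume := hc.memLp_of_hasCompactSupport hs
  have hcont : Continuous (𝓕 h) :=
    VectorFourier.fourierIntegral_continuous (μ := volume) (L := innerₗ ℝ) Real.continuous_fourierChar
      (by exact continuous_inner) hi
  set u : Lp ℂ 2 (volume : Measure ℝ) := 𝓕 (h2.toLp h) with hu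
  have key : ∀ᵐ x ∂(volume : Measure ℝ), u x = 𝓕 h x := by
    apply ae_eq_of_integral_contDiff_smul_eq
    · exact (Lp.memLp u).locallyIntegrable (by norm_num)
    · exact hcont.locallyIntegrable
    · intro φ hφ hφs
      have hφ' : ContDiff ℝ (⊤ : ℕ∞) (fun x => (φ x : ℂ)) :=
        Complex.ofRealCLM.contDiff.comp hφ
      have hφs' : HasCompactSupport (fun x => (φ x : ℂ)) :=
        hφs.comp_left (g := Complex.ofReal) (by simp)
      let Φ : 𝓢(ℝ, ℂ) := hφs'.toSchwartzMap hφ'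
      have e1 := congrArg (fun T => T Φ) (Lp.fourier_toTemperedDistribution_eq (h2.toLp h))
      simp only [TemperedDistribution.fourier_apply, Lp.toTemperedDistribution_apply] at e1
      have e2 : ∫ x, (𝓕 Φ) x • (h2.toLp h) x = ∫ x, (𝓕 Φ) x • h x := by
        apply integral_congr_ae
        filter_upwards [h2.coeFn_toLp] with x hx
        rw [hx]
      have e3 : ∫ x, (𝓕 Φ) x • h x = ∫ x, Φ x • 𝓕 h x := by
        have := VectorFourier.integral_fourierIntegral_smul_eq_flip (μ := volume) (ν := volume)
          (L := innerₗ ℝ) (f := (Φ : ℝ → ℂ)) (g := h) Real.continuous_fourierChar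
          (by exact continuous_inner) Φ.integrable hi
        rw [flip_innerₗ] at this
        exact this
      rw [e2, e3] at e1
      have e4 : ∀ x, Φ x = (φ x : ℂ) := fun x => rfl
      simp only [e4] at e1
      simpa using e1.symm
  exact (memLp_congr_ae key).1 (Lp.memLp u)

lemma aux_fourier_integrable_s7 (g : ℝ → ℝ) (hg : ContDiff ℝ 2 g) (hs : HasCompactSupport g) :
    Integrable (𝓕 (fun x => (g x : ℂ))) ∧
    Integrable (fun w : ℝ => |w| * ‖𝓕 (fun x => (g x : ℂ)) w‖) := by
  set h : ℝ → ℂ := fun x => (g x : ℂ) with hh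
  have hC : ContDiff ℝ 2 h := Complex.ofRealCLM.contDiff.comp hg
  have hS : HasCompactSupport h := hs.comp_left (g := Complex.ofReal) (by simp)
  have hS1 : HasCompactSupport (deriv h) := hS.deriv
  have hS2 : HasCompactSupport (deriv (deriv h)) := hS1.deriv
  have hC1 : ContDiff ℝ 1 (deriv h) := by
    have : ContDiff ℝ (1 + 1) h := by simpa [one_add_one_eq_two] using hC
    exact (contDiff_succ_iff_deriv.1 this).2.2
  have hC2 : Continuous (deriv (deriv h)) := hC1.continuous_deriv (le_refl _)
  have hi : Integrable h := hC.continuous.integrable_of_hasCompactSupport hS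
  have hi1 : Integrable (deriv h) := hC1.continuous.integrable_of_hasCompactSupport hS1
  have hi2 : Integrable (deriv (deriv h)) := hC2.integrable_of_hasCompactSupport hS2
  have f1 := Real.fourier_deriv hi (hC.differentiable (by norm_num)) hi1
  have f2 := Real.fourier_deriv hi1 (hC1.differentiable (by norm_num)) hi2
  have m0 := aux_memLp_fourier h hC.continuous hS
  have m2 := aux_memLp_fourier _ hC2 hS2
  have hcont : Continuous (𝓕 h) :=
    VectorFourier.fourierIntegral_continuous (μ := volume) (L := innerₗ ℝ) Real.continuous_fourierChar
      (by exact continuous_inner) hi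
  have eq2 : ∀ w : ℝ, (1 + w ^ 2 : ℂ) * 𝓕 h w
      = 𝓕 h w + (-(1 / (4 * (Real.pi : ℂ) ^ 2))) * 𝓕 (deriv (deriv h)) w := by
    intro w
    have hpi : (Real.pi : ℂ) ≠ 0 := by exact_mod_cast Real.pi_ne_zero
    rw [f2, f1]
    simp only [smul_eq_mul]
    field_simp
    ring_nf
    simp only [Complex.I_sq]
    ring
  have m3 : MemLp (fun w : ℝ => (1 + w ^ 2 : ℂ) * 𝓕 h w) 2 volume := by
    simp_rw [eq2]
    exact m0.add (m2.const_mul _)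
  have i3 : Integrable (fun w : ℝ => ‖(1 + w ^ 2 : ℂ) * 𝓕 h w‖ ^ 2) :=
    m3.norm.integrable_sq
  have i4 := i3.add integrable_inv_one_add_sq
  have nrm : ∀ w : ℝ, ‖(1 + w ^ 2 : ℂ) * 𝓕 h w‖ = (1 + w ^ 2) * ‖𝓕 h w‖ := by
    intro w
    rw [norm_mul]
    congr 1
    have : (1 + w ^ 2 : ℂ) = ((1 + w ^ 2 : ℝ) : ℂ) := by push_cast; rfl
    rw [this, Complex.norm_real, Real.norm_of_nonneg (by positivity)]
  have main : ∀ (w a : ℝ), 0 ≤ a → a ^ 2 ≤ 1 + w ^ 2 → a * ‖𝓕 h w‖ ≤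
      ‖(1 + w ^ 2 : ℂ) * 𝓕 h w‖ ^ 2 + (1 + w ^ 2)⁻¹ := by
    intro w a ha0 ha
    rw [nrm]
    set x := ‖𝓕 h w‖
    have hx : 0 ≤ x := norm_nonneg _
    have hp : 0 < 1 + w ^ 2 := by positivity
    have h1 : (a * x) ^ 2 ≤ (1 + w ^ 2) * x ^ 2 := by
      rw [mul_pow]; gcongr
    set p := 1 + w ^ 2
    have h2 : (1 + w ^ 2) * x ^ 2 = ((p * x) ^ 2) * p⁻¹ := by
      change p * x ^ 2 = _
      field_simp
    have h3 : 0 ≤ p⁻¹ := by positivity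
    have h4 : 0 ≤ (p * x) ^ 2 := by positivity
    have h5 : (a * x) ^ 2 ≤ ((p * x) ^ 2 + p⁻¹) ^ 2 := by
      rw [h2] at h1
      nlinarith
    exact le_of_sq_le_sq h5 (by positivity)
  constructor
  · refine i4.mono' hcont.aestronglyMeasurable (Filter.Eventually.of_forall fun w => ?_)
    have := main w 1 zero_le_one (by nlinarith [sq_nonneg w])
    simpa using this
  · refine i4.mono' (by fun_prop) (Filter.Eventually.of_forall fun w => ?_)
    have := main w |w| (abs_nonneg w) (by rw [sq_abs]; linarith)
    rw [Real.norm_of_nonneg (by positivity)]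
    exact this


lemma aux_fT_eq (h : ℝ → ℂ) (ξ : ℝ) :
    fourierTransform' h ξ = ((Real.sqrt (2 * Real.pi))⁻¹ : ℝ) * 𝓕 h (ξ / (2 * Real.pi)) := by
  have hpi : (Real.pi : ℂ) ≠ 0 := by exact_mod_cast Real.pi_ne_zero
  rw [fourierTransform', Real.fourier_real_eq_integral_exp_smul, Complex.real_smul]
  congr 1
  apply integral_congr_ae
  refine Filter.Eventually.of_forall fun x => ?_
  simp only [smul_eq_mul]
  rw [mul_comm]
  congr 2
  push_cast
  field_simp

lemma aux_fT_facts (g : ℝ → ℝ) (hg : ContDiff ℝ 2 g) (hs : HasCompactSupport g) :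
    Continuous (fourierTransform' (fun x => Complex.ofReal (g x))) ∧
    Integrable (fourierTransform' (fun x => Complex.ofReal (g x))) ∧
    Integrable (fun s : ℝ => |s| * ‖fourierTransform' (fun x => Complex.ofReal (g x)) s‖) ∧
    ∀ l : ℝ, ∫ s : ℝ, fourierTransform' (fun x => Complex.ofReal (g x)) s *
      Complex.exp (Complex.I * s * l) = (Real.sqrt (2 * Real.pi) : ℂ) * (g l : ℂ) := by
  have hpp : (0 : ℝ) < 2 * Real.pi := by positivity
  obtain ⟨h1, h2⟩ := aux_fourier_integrable_s7 g hg hs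
  set h : ℝ → ℂ := fun x => (g x : ℂ) with hh
  have hC : Continuous h := Complex.continuous_ofReal.comp hg.continuous
  have hS : HasCompactSupport h := hs.comp_left (g := Complex.ofReal) (by simp)
  have hi : Integrable h := hC.integrable_of_hasCompactSupport hS
  have hcont : Continuous (𝓕 h) :=
    VectorFourier.fourierIntegral_continuous (μ := volume) (L := innerₗ ℝ)
      Real.continuous_fourierChar (by exact continuous_inner) hi
  have e : fourierTransform' h = fun s : ℝ =>
      ((Real.sqrt (2 * Real.pi))⁻¹ : ℝ) * 𝓕 h (s / (2 * Real.pi)) := by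
    funext s; exact aux_fT_eq h s
  have eint := h1.comp_div hpp.ne'
  refine ⟨?_, ?_, ?_, ?_⟩
  · rw [e]
    exact continuous_const.mul (hcont.comp (continuous_id.div_const _))
  · rw [e]; exact eint.const_mul _
  · have := (h2.comp_div hpp.ne').const_mul ((2 * Real.pi) * (Real.sqrt (2 * Real.pi))⁻¹)
    refine this.congr (Filter.Eventually.of_forall fun s => ?_)
    simp only [e]
    rw [norm_mul, Complex.norm_real, Real.norm_of_nonneg (by positivity), abs_div, abs_of_pos hpp]
    field_simp
  · intro l
    have inv : 𝓕⁻ (𝓕 h) l = h l := by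
      rw [hC.fourierInv_fourier_eq hi h1]
    rw [Real.fourierInv_eq'] at inv
    have sub := Measure.integral_comp_div
      (fun v : ℝ => Complex.exp ((↑(2 * Real.pi * inner ℝ v l) * Complex.I)) • 𝓕 h v) (2 * Real.pi)
    rw [inv, abs_of_pos hpp] at sub
    have : ∀ s : ℝ, fourierTransform' h s * Complex.exp (Complex.I * s * l) =
        ((Real.sqrt (2 * Real.pi))⁻¹ : ℝ) *
        (Complex.exp ((↑(2 * Real.pi * inner ℝ (s / (2 * Real.pi)) l) * Complex.I)) •
          𝓕 h (s / (2 * Real.pi))) := by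
      intro s
      have hpi : (Real.pi : ℂ) ≠ 0 := by exact_mod_cast Real.pi_ne_zero
      rw [aux_fT_eq, smul_eq_mul]
      have : Complex.I * s * l =
          ((2 * Real.pi * inner ℝ (s / (2 * Real.pi)) l : ℝ) : ℂ) * Complex.I := by
        simp only [RCLike.inner_apply, conj_trivial]
        push_cast
        field_simp
      rw [this]
      ring
    simp_rw [this]
    rw [integral_const_mul, sub, Complex.real_smul, ← mul_assoc, ← Complex.ofReal_mul]
    congr 2
    have hq := Real.mul_self_sqrt hpp.le
    have hq0 : Real.sqrt (2 * Real.pi) ≠ 0 := (Real.sqrt_pos.2 hpp).ne'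
    rw [inv_mul_eq_iff_eq_mul₀ hq0, hq]

lemma aux_slice_nonneg (F : ℝ × ℝ → ℂ) (s : ℝ) (hs : 0 ≤ s) :
    (fun t => PiRegion.indicator F (s, t)) = (Set.Icc 0 s).indicator (fun t => F (s, t)) := by
  funext t
  by_cases ht : t ∈ Set.Icc 0 s
  · rw [Set.indicator_of_mem ht, Set.indicator_of_mem]
    exact Or.inl ht
  · rw [Set.indicator_of_notMem ht, Set.indicator_of_notMem]
    rintro (h | h)
    · exact ht h
    · simp only at h
      exact ht ⟨by linarith, by linarith⟩

lemma aux_slice_nonpos (F : ℝ × ℝ → ℂ) (s : ℝ) (hs : s ≤ 0) :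
    (fun t => PiRegion.indicator F (s, t)) = (Set.Icc s 0).indicator (fun t => F (s, t)) := by
  funext t
  by_cases ht : t ∈ Set.Icc s 0
  · rw [Set.indicator_of_mem ht, Set.indicator_of_mem]
    exact Or.inr ht
  · rw [Set.indicator_of_notMem ht, Set.indicator_of_notMem]
    rintro (h | h)
    · simp only at h
      exact ht ⟨by linarith, by linarith⟩
    · exact ht h

lemma aux_slice (F : ℝ × ℝ → ℂ) (s : ℝ) :
    (fun t => PiRegion.indicator F (s, t)) = (Set.uIcc 0 s).indicator (fun t => F (s, t)) := by
  rcases le_total 0 s with h | h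
  · rw [aux_slice_nonneg F s h, Set.uIcc_of_le h]
  · rw [aux_slice_nonpos F s h, Set.uIcc_of_ge h]

lemma aux_measurableSet : MeasurableSet PiRegion := by
  have : IsClosed PiRegion := by
    apply IsClosed.union
    · exact (isClosed_le continuous_const continuous_snd).inter
        (isClosed_le continuous_snd continuous_fst)
    · exact (isClosed_le continuous_fst continuous_snd).inter
        (isClosed_le continuous_snd continuous_const)
  exact this.measurableSet

lemma aux_measurable_sign : Measurable (fun x : ℝ => (Real.sign x : ℂ)) := by
  apply Complex.measurable_ofReal.comp
  unfold Real.sign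
  exact Measurable.ite measurableSet_Iio measurable_const
    (Measurable.ite measurableSet_Ioi measurable_const measurable_const)

lemma aux_sign_norm (x : ℝ) : ‖(Real.sign x : ℂ)‖ ≤ 1 := by
  rcases Real.sign_apply_eq x with h | h | h <;> simp [h]

/-- The inner integral, with the common factor removed. -/
lemma aux_inner (c : ℂ) (hc : c ≠ 0) (F : ℝ × ℝ → ℂ) (s : ℝ) (a : ℂ)
    (hF : ∀ t : ℝ, F (s, t) = (Real.sign s : ℂ) * (a * Complex.exp (c * t))) :
    ∫ t, PiRegion.indicator F (s, t) = a * ((Complex.exp (c * s) - 1) / c) := by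
  have key := integral_exp_mul_complex (a := 0) (b := s) hc
  simp only [Complex.ofReal_zero, mul_zero, Complex.exp_zero] at key
  rcases lt_trichotomy s 0 with h | h | h
  · rw [aux_slice_nonpos F s h.le, integral_indicator measurableSet_Icc,
      integral_Icc_eq_integral_Ioc, ← intervalIntegral.integral_of_le h.le,
      intervalIntegral.integral_symm]
    simp_rw [hF, Real.sign_of_neg h]
    rw [intervalIntegral.integral_const_mul, intervalIntegral.integral_const_mul, key]
    push_cast
    ring
  · subst h
    rw [aux_slice_nonneg F 0 le_rfl, integral_indicator measurableSet_Icc]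
    simp [hF]
  · rw [aux_slice_nonneg F s h.le, integral_indicator measurableSet_Icc,
      integral_Icc_eq_integral_Ioc, ← intervalIntegral.integral_of_le h.le]
    simp_rw [hF, Real.sign_of_pos h]
    rw [intervalIntegral.integral_const_mul, intervalIntegral.integral_const_mul, key]
    push_cast
    ring

lemma aux_integrable (A : ℝ → ℂ) (hA : Measurable A) (hi : Integrable (fun s : ℝ => |s| * ‖A s‖))
    (K : ℝ × ℝ → ℂ) (hK : Continuous K) (C : ℝ) (hC : ∀ p, ‖K p‖ ≤ C) :
    Integrable (PiRegion.indicator (fun p : ℝ × ℝ => A p.1 * K p)) := by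
  have hC0 : 0 ≤ C := (norm_nonneg _).trans (hC 0)
  have hm : Measurable (PiRegion.indicator (fun p : ℝ × ℝ => A p.1 * K p)) :=
    ((hA.comp measurable_fst).mul hK.measurable).indicator aux_measurableSet
  rw [Measure.volume_eq_prod, integrable_prod_iff hm.aestronglyMeasurable]
  constructor
  · refine Filter.Eventually.of_forall fun s => ?_
    rw [aux_slice, integrable_indicator_iff measurableSet_uIcc]
    refine ContinuousOn.integrableOn_compact isCompact_uIcc ?_
    have hKs : Continuous (fun t : ℝ => A s * K (s, t)) := by fun_prop
    exact hKs.continuousOn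
  · refine (hi.const_mul C).mono' ?_ (Filter.Eventually.of_forall fun s => ?_)
    · exact (hm.norm.stronglyMeasurable.integral_prod_right').aestronglyMeasurable
    · rw [Real.norm_of_nonneg (integral_nonneg fun t => norm_nonneg _)]
      have e : ∀ t, ‖PiRegion.indicator (fun p : ℝ × ℝ => A p.1 * K p) (s, t)‖ =
          (Set.uIcc 0 s).indicator (fun t => ‖A s * K (s, t)‖) t := by
        intro t
        have := congrFun (aux_slice (fun p : ℝ × ℝ => A p.1 * K p) s) t
        simp only at this
        rw [this, norm_indicator_eq_indicator_norm]
      simp_rw [e]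
      rw [integral_indicator measurableSet_uIcc]
      have b := norm_setIntegral_le_of_norm_le_const (μ := volume) (s := Set.uIcc 0 s)
        (f := fun t => ‖A s * K (s, t)‖) (C := ‖A s‖ * C) isCompact_uIcc.measure_lt_top
        (fun t _ => by
          rw [norm_norm, norm_mul]
          gcongr
          exact hC _)
      have v : volume.real (Set.uIcc 0 s) = |s| := by
        simp [Measure.real, Real.volume_interval]
      rw [v] at b
      refine (le_abs_self _).trans (b.trans (le_of_eq (by ring)))

end helpers

/-- Let `f : ℝ → ℝ` be nonnegative, `C²` with compact support, with
`g := √f` also `C²` with compact support. Then for `λ₀ ≠ λ₁`,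
`(f(λ₀)-f(λ₁))/(λ₀-λ₁) = (i/√(2π)) ∫_{ℝ²} 1_Π(s₀,s₁) sgn(s₀) 𝓕g(s₀)
   (e^{i(s₀-s₁)λ₀} g(λ₀) e^{is₁λ₁} + e^{i(s₀-s₁)λ₀} e^{is₁λ₁} g(λ₁)) d(s₀,s₁)`,
the integral being absolutely convergent. -/
theorem divided_difference_BS_representation_modified
    (f : ℝ → ℝ) (hfpos : ∀ x, 0 ≤ f x)
    (hf : ContDiff ℝ 2 f) (hfsupp : HasCompactSupport f)
    (g : ℝ → ℝ) (hgdef : g = fun x => Real.sqrt (f x))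
    (hg : ContDiff ℝ 2 g) (hgsupp : HasCompactSupport g)
    (lam₀ lam₁ : ℝ) (hne : lam₀ ≠ lam₁) :
    Integrable (PiRegion.indicator (fun p : ℝ × ℝ =>
        (Real.sign p.1 : ℂ) * fourierTransform' (fun x => Complex.ofReal (g x)) p.1 *
          (Complex.exp (Complex.I * (p.1 - p.2) * lam₀) * (g lam₀ : ℂ) *
              Complex.exp (Complex.I * p.2 * lam₁) +
            Complex.exp (Complex.I * (p.1 - p.2) * lam₀) *
              Complex.exp (Complex.I * p.2 * lam₁) * (g lam₁ : ℂ)))) ∧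
    ((f lam₀ - f lam₁ : ℝ) : ℂ) / ((lam₀ - lam₁ : ℝ) : ℂ) =
      (Complex.I / (Real.sqrt (2 * Real.pi) : ℂ)) *
        ∫ p : ℝ × ℝ, PiRegion.indicator (fun p : ℝ × ℝ =>
          (Real.sign p.1 : ℂ) * fourierTransform' (fun x => Complex.ofReal (g x)) p.1 *
            (Complex.exp (Complex.I * (p.1 - p.2) * lam₀) * (g lam₀ : ℂ) *
                Complex.exp (Complex.I * p.2 * lam₁) +
              Complex.exp (Complex.I * (p.1 - p.2) * lam₀) *
                Complex.exp (Complex.I * p.2 * lam₁) * (g lam₁ : ℂ))) p := by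
  obtain ⟨hc, hi, hi', hinv⟩ := aux_fT_facts g hg hgsupp
  set G := fourierTransform' (fun x => Complex.ofReal (g x)) with hG
  have hexp : ∀ (x l : ℝ), ‖Complex.exp (Complex.I * x * l)‖ = 1 := by
    intro x l
    have : Complex.I * x * l = ((x * l : ℝ) : ℂ) * Complex.I := by push_cast; ring
    rw [this, Complex.norm_exp_ofReal_mul_I]
  have hI : Integrable (PiRegion.indicator (fun p : ℝ × ℝ =>
        (Real.sign p.1 : ℂ) * G p.1 *
          (Complex.exp (Complex.I * (p.1 - p.2) * lam₀) * (g lam₀ : ℂ) *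
              Complex.exp (Complex.I * p.2 * lam₁) +
            Complex.exp (Complex.I * (p.1 - p.2) * lam₀) *
              Complex.exp (Complex.I * p.2 * lam₁) * (g lam₁ : ℂ)))) := by
    refine aux_integrable (fun s => (Real.sign s : ℂ) * G s) (aux_measurable_sign.mul hc.measurable)
      (hi'.mono' ?_ ?_) (fun p : ℝ × ℝ =>
          (Complex.exp (Complex.I * (p.1 - p.2) * lam₀) * (g lam₀ : ℂ) *
              Complex.exp (Complex.I * p.2 * lam₁) +
            Complex.exp (Complex.I * (p.1 - p.2) * lam₀) *
              Complex.exp (Complex.I * p.2 * lam₁) * (g lam₁ : ℂ))) (by fun_prop)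
      (‖(g lam₀ : ℂ)‖ + ‖(g lam₁ : ℂ)‖) ?_
    · exact (continuous_abs.measurable.mul
        (aux_measurable_sign.mul hc.measurable).norm).aestronglyMeasurable
    · refine Filter.Eventually.of_forall fun s => ?_
      rw [norm_mul, norm_norm, norm_mul, Real.norm_eq_abs, abs_abs]
      have := mul_le_mul_of_nonneg_right (aux_sign_norm s) (norm_nonneg (G s))
      rw [one_mul] at this
      gcongr
    · intro p
      refine (norm_add_le _ _).trans (le_of_eq ?_)
      have := hexp (p.1 - p.2) lam₀
      push_cast at this
      simp only [norm_mul, this, hexp]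
      ring
  refine ⟨hI, ?_⟩
  rw [Measure.volume_eq_prod] at hI ⊢
  rw [integral_prod _ hI]
  have hd : (lam₁ : ℂ) - lam₀ ≠ 0 := by
    rw [sub_ne_zero]; exact_mod_cast hne.symm
  have hd' : (lam₀ : ℂ) - lam₁ ≠ 0 := by
    rw [sub_ne_zero]; exact_mod_cast hne
  set c : ℂ := Complex.I * ((lam₁ : ℂ) - lam₀) with hcdef
  have hc0 : c ≠ 0 := mul_ne_zero Complex.I_ne_zero hd
  have inner_eq : ∀ s : ℝ, ∫ t : ℝ, PiRegion.indicator (fun p : ℝ × ℝ =>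
        (Real.sign p.1 : ℂ) * G p.1 *
          (Complex.exp (Complex.I * (p.1 - p.2) * lam₀) * (g lam₀ : ℂ) *
              Complex.exp (Complex.I * p.2 * lam₁) +
            Complex.exp (Complex.I * (p.1 - p.2) * lam₀) *
              Complex.exp (Complex.I * p.2 * lam₁) * (g lam₁ : ℂ))) (s, t) =
      (((g lam₀ : ℂ) + g lam₁) / c) * (G s * Complex.exp (Complex.I * s * lam₁) -
        G s * Complex.exp (Complex.I * s * lam₀)) := by
    intro s
    rw [aux_inner c hc0 _ s
      (G s * ((g lam₀ : ℂ) + g lam₁) * Complex.exp (Complex.I * s * lam₀))]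
    · have : Complex.exp (Complex.I * s * lam₁) =
          Complex.exp (Complex.I * s * lam₀) * Complex.exp (c * s) := by
        rw [← Complex.exp_add]; congr 1; rw [hcdef]; ring
      rw [this]
      ring
    · intro t
      have e1 : Complex.exp (Complex.I * (s - t) * lam₀) * Complex.exp (Complex.I * t * lam₁) =
          Complex.exp (Complex.I * s * lam₀) * Complex.exp (c * t) := by
        rw [← Complex.exp_add, ← Complex.exp_add]; congr 1; rw [hcdef]; ring
      simp only
      linear_combination ((Real.sign s : ℂ) * G s * ((g lam₀ : ℂ) + g lam₁)) * e1
  simp_rw [inner_eq]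
  have hint : ∀ l : ℝ, Integrable (fun s : ℝ => G s * Complex.exp (Complex.I * s * l)) := by
    intro l
    refine hi.norm.mono' (by fun_prop) (Filter.Eventually.of_forall fun s => ?_)
    rw [norm_mul, hexp, mul_one]
  rw [integral_const_mul, integral_sub (hint _) (hint _), hinv, hinv]
  have hff : ∀ x, f x = g x ^ 2 := by
    intro x; rw [hgdef]; exact (Real.sq_sqrt (hfpos x)).symm
  have hq0 : (Real.sqrt (2 * Real.pi) : ℂ) ≠ 0 := by
    exact_mod_cast (Real.sqrt_pos.2 (by positivity : (0 : ℝ) < 2 * Real.pi)).ne'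
  rw [hff, hff, hcdef]
  push_cast
  have hIne := Complex.I_ne_zero
  rw [show (lam₁ : ℂ) - lam₀ = -((lam₀ : ℂ) - lam₁) by ring]
  field_simp
  ring
end
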